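/- Let q, k be real with 0 < q < 1 and 0 < k < 1, let n ∈ ℕ, and let λ_1, λ_2 ∈ ℂ satisfy Re(λ_2 − λ_1) + n > 0, q^{λ_2−λ_1+1+m} ≠ 1, q^{λ_2−λ_1+k+m} ≠ 1, and q^{λ_1−λ_2+1−k+m} ≠ 1 for all m ∈ ℕ. Let R be real with q^{(1−k)/2} < R < q^{(k−1)/2}. Then (1/(2πi)) ∮_{|y|=R} y^n · [Θ_q(q^{λ_2−λ_1+(k+1)/2}/y) / Θ_q(q^{(1+k)/2}/y)] · [(q^{(1+k)/2}/y ; q)_∞ / (q^{(1−k)/2}/y ; q)_∞] · dy/y = q^{n(1−k)/2} · [Γ_q(1−k) / (Γ_q(λ_2−λ_1+1) Γ_q(λ_1−λ_2+1−k))] · [Γ_q(λ_2−λ_1+k+n) / Γ_q(λ_2−λ_1+k)] · [Γ_q(λ_2−λ_1+1) / Γ_q(λ_2−λ_1+n+1)]. -/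

import Mathlib

/-- `q^x := exp(x·log q)` for real `q > 0` and complex `x`. -/
noncomputable def qpow (q : ℝ) (x : ℂ) : ℂ := Complex.exp (x * Real.log q)

/-- The q-Pochhammer symbol `(z;q)_∞ = ∏_{i=0}^∞ (1 - z qⁱ)`. -/
noncomputable def qPochInf (q : ℝ) (z : ℂ) : ℂ := ∏' i : ℕ, (1 - z * (q : ℂ) ^ i)

/-- `Θ_q(z) = (z;q)_∞ (q z⁻¹;q)_∞ (q;q)_∞`. -/
noncomputable def qTheta (q : ℝ) (z : ℂ) : ℂ :=
  qPochInf q z * qPochInf q ((q : ℂ) * z⁻¹) * qPochInf q (q : ℂ)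

/-- The q-Gamma function `Γ_q(x) = (q;q)_∞ (1-q)^{1-x} / (q^x;q)_∞`. -/
noncomputable def qGamma (q : ℝ) (x : ℂ) : ℂ :=
  qPochInf q (q : ℂ) * (1 - (q : ℂ)) ^ (1 - x) / qPochInf q (qpow q x)


open Filter Topology Metric

theorem qp_summable (q : ℝ) (hq0 : 0 < q) (hq1 : q < 1) (z : ℂ) :
    Summable (fun i : ℕ => ‖-(z * (q : ℂ) ^ i)‖) := by
  have : (fun i : ℕ => ‖-(z * (q : ℂ) ^ i)‖) = fun i : ℕ => ‖z‖ * q ^ i := by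
    ext i
    simp [abs_of_pos hq0]
  rw [this]
  exact (summable_geometric_of_lt_one hq0.le hq1).mul_left _

theorem qp_step (q : ℝ) (hq0 : 0 < q) (hq1 : q < 1) (z : ℂ) :
    qPochInf q z = (1 - z) * qPochInf q (q * z) := by
  unfold qPochInf
  rw [tprod_eq_zero_mul']
  · simp only [pow_zero, mul_one]
    congr 1
    apply tprod_congr
    intro i
    ring
  · have := multipliable_one_add_of_summable (qp_summable q hq0 hq1 (q * z))
    refine this.congr fun i => ?_
    ring

theorem qp_ne_zero (q : ℝ) (hq0 : 0 < q) (hq1 : q < 1) (z : ℂ)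
    (h : ∀ i : ℕ, z * (q : ℂ) ^ i ≠ 1) : qPochInf q z ≠ 0 := by
  have := tprod_one_add_ne_zero_of_summable (f := fun i : ℕ => -(z * (q : ℂ) ^ i))
    (fun i hi => h i (by linear_combination -hi)) (qp_summable q hq0 hq1 z)
  simpa [qPochInf, sub_eq_add_neg] using this

theorem qp_ne_zero' (q : ℝ) (hq0 : 0 < q) (hq1 : q < 1) (z : ℂ) (hz : ‖z‖ < 1) :
    qPochInf q z ≠ 0 := by
  apply qp_ne_zero q hq0 hq1
  intro i hi
  have h1 : ‖z * (q : ℂ) ^ i‖ = 1 := by rw [hi]; simp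
  rw [norm_mul, norm_pow, Complex.norm_real, Real.norm_eq_abs, abs_of_pos hq0] at h1
  have h2 : q ^ i ≤ 1 := pow_le_one₀ hq0.le hq1.le
  nlinarith [norm_nonneg z, pow_pos hq0 i]

theorem qp_differentiable (q : ℝ) (hq0 : 0 < q) (hq1 : q < 1) :
    Differentiable ℂ (qPochInf q) := by
  intro z
  have hs : Summable (fun i : ℕ => (‖z‖ + 1) * q ^ i) :=
    (summable_geometric_of_lt_one hq0.le hq1).mul_left _
  have hH := Summable.hasProdLocallyUniformlyOn_nat_one_add (f := fun (i : ℕ) (w : ℂ) => -(w * (q : ℂ) ^ i))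
    (K := ball (0 : ℂ) (‖z‖ + 1)) isOpen_ball hs (.of_forall fun i w hw => by
      simp only [mem_ball, dist_zero_right] at hw
      rw [norm_neg, norm_mul, norm_pow, Complex.norm_real, Real.norm_eq_abs, abs_of_pos hq0]
      have := pow_pos hq0 i
      gcongr) (fun i => by fun_prop)
  have hd := hH.differentiableOn (.of_forall fun t ↦ by
    have : DifferentiableOn ℂ (fun w : ℂ => ∏ i ∈ t, (1 + -(w * (q : ℂ) ^ i)))
      (ball (0 : ℂ) (‖z‖ + 1)) := DifferentiableOn.fun_finsetProd (fun _ _ ↦ by fun_prop)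
    exact this) isOpen_ball
  have h2 := hd.differentiableAt (isOpen_ball.mem_nhds (show z ∈ ball (0 : ℂ) (‖z‖ + 1) by simp))
  have e : qPochInf q = fun x : ℂ => ∏' (i : ℕ), (1 + -(x * (q : ℂ) ^ i)) := by
    ext w
    simp [qPochInf, sub_eq_add_neg]
  rw [e]
  exact h2

theorem qp_zero (q : ℝ) : qPochInf q 0 = 1 := by simp [qPochInf]

theorem qp_scale (f : ℂ → ℂ) (t r : ℝ) :
    (∮ z in C(0, t * r), f z) = t * ∮ z in C(0, r), f (t * z) := by
  have h : ∀ θ, circleMap 0 (t * r) θ = t * circleMap 0 r θ := by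
    intro θ; simp [circleMap]; ring
  rw [circleIntegral, circleIntegral, ← intervalIntegral.integral_const_mul]
  congr 1
  ext θ
  simp only [deriv_circleMap, h, smul_eq_mul]
  ring

theorem qp_annulus (f : ℂ → ℂ) (r1 r2 : ℝ) (h0 : 0 < r1) (h : r1 ≤ r2)
    (hd : ∀ z : ℂ, r1 ≤ ‖z‖ → ‖z‖ ≤ r2 → DifferentiableAt ℂ f z) :
    (∮ z in C(0, r2), f z) = ∮ z in C(0, r1), f z := by
  apply Complex.circleIntegral_eq_of_differentiable_on_annulus_off_countable h0 h
    Set.countable_empty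
  · intro z hz
    simp at hz
    exact (hd z hz.2 hz.1).continuousAt.continuousWithinAt
  · intro z hz
    simp at hz
    exact hd z hz.2.le hz.1.le

/-- The Laurent function. -/
noncomputable def qpF (q c : ℝ) (a : ℂ) (z : ℂ) : ℂ :=
  qPochInf q (a * q / z) * qPochInf q (z / a) / (qPochInf q z * qPochInf q (c / z))

theorem qp_comp_diff (q : ℝ) (hq0 : 0 < q) (hq1 : q < 1) (g : ℂ → ℂ) (z : ℂ)
    (hg : DifferentiableAt ℂ g z) : DifferentiableAt ℂ (fun w => qPochInf q (g w)) z :=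
  ((qp_differentiable q hq0 hq1) (g z)).comp z hg

theorem qpF_diff (q c : ℝ) (a : ℂ) (hq0 : 0 < q) (hq1 : q < 1) (hc0 : 0 < c) (z : ℂ)
    (h1 : c < ‖z‖) (h2 : ‖z‖ < 1) : DifferentiableAt ℂ (qpF q c a) z := by
  have hz : z ≠ 0 := by rintro rfl; simp at h1; linarith
  have hcz : ‖(c : ℂ) / z‖ < 1 := by
    rw [norm_div, Complex.norm_real, Real.norm_eq_abs, abs_of_pos hc0, div_lt_one (by linarith)]
    exact h1
  unfold qpF
  refine DifferentiableAt.div (DifferentiableAt.mul ?_ ?_) (DifferentiableAt.mul ?_ ?_) ?_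
  · exact qp_comp_diff q hq0 hq1 _ z (by fun_prop (disch := assumption))
  · exact qp_comp_diff q hq0 hq1 _ z (by fun_prop)
  · exact qp_differentiable q hq0 hq1 z
  · exact qp_comp_diff q hq0 hq1 _ z (by fun_prop (disch := assumption))
  · exact mul_ne_zero (qp_ne_zero' q hq0 hq1 _ h2) (qp_ne_zero' q hq0 hq1 _ hcz)

theorem qp_rec (q c : ℝ) (a : ℂ) (hq0 : 0 < q) (hq1 : q < 1) (hc0 : 0 < c) (ha : a ≠ 0)
    (r : ℝ) (h1 : c < r) (h2 : r < 1) (n : ℕ) :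
    (∮ z in C(0, r), z ^ (n + 1) * qpF q c a z / z) * (1 - a * q ^ (n + 1)) =
      (∮ z in C(0, r), z ^ n * qpF q c a z / z) * (c - a * q ^ (n + 1)) := by
  have hr : 0 < r := hc0.trans h1
  have hqC : (q : ℂ) ≠ 0 := by exact_mod_cast hq0.ne'
  have hcint : ∀ m : ℕ, CircleIntegrable (fun z => z ^ m * qpF q c a z / z) 0 r := by
    intro m
    apply ContinuousOn.circleIntegrable hr.le
    intro z hz
    simp at hz
    have hz0 : z ≠ 0 := by rintro rfl; simp at hz; linarith
    have := qpF_diff q c a hq0 hq1 hc0 z (by rw [hz]; exact h1) (by rw [hz]; exact h2)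
    apply ContinuousAt.continuousWithinAt
    apply DifferentiableAt.continuousAt (𝕜 := ℂ)
    fun_prop (disch := assumption)
  set P : ℂ → ℂ := fun z => z ^ n * (qPochInf q (a * q / z) * qPochInf q (z / a) /
    (qPochInf q (q * z) * qPochInf q (c / z))) / z with hP
  have hA : (∮ z in C(0, r / q), P z) = ∮ z in C(0, r), P z := by
    apply qp_annulus _ _ _ hr
    · rw [le_div_iff₀ hq0]; nlinarith
    · intro z hz1 hz2
      have hz : z ≠ 0 := by rintro rfl; simp at hz1; linarith
      have hcz : ‖(c : ℂ) / z‖ < 1 := by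
        rw [norm_div, Complex.norm_real, Real.norm_eq_abs, abs_of_pos hc0, div_lt_one (by linarith)]
        linarith
      have hqz : ‖(q : ℂ) * z‖ < 1 := by
        rw [norm_mul, Complex.norm_real, Real.norm_eq_abs, abs_of_pos hq0]
        rw [le_div_iff₀ hq0] at hz2
        linarith
      refine DifferentiableAt.div (DifferentiableAt.mul (by fun_prop) (DifferentiableAt.div
        (DifferentiableAt.mul ?_ ?_) (DifferentiableAt.mul ?_ ?_) ?_)) (by fun_prop) hz
      · exact qp_comp_diff q hq0 hq1 _ z (by fun_prop (disch := assumption))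
      · exact qp_comp_diff q hq0 hq1 _ z (by fun_prop)
      · exact qp_comp_diff q hq0 hq1 _ z (by fun_prop)
      · exact qp_comp_diff q hq0 hq1 _ z (by fun_prop (disch := assumption))
      · exact mul_ne_zero (qp_ne_zero' q hq0 hq1 _ hqz) (qp_ne_zero' q hq0 hq1 _ hcz)
  have hB : (∮ z in C(0, r), P z) = (∮ z in C(0, r), z ^ n * qpF q c a z / z) -
      ∮ z in C(0, r), z ^ (n + 1) * qpF q c a z / z := by
    rw [← circleIntegral.integral_sub (hcint n) (hcint (n + 1))]
    apply circleIntegral.integral_congr hr.le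
    intro z hz
    simp at hz
    have hz0 : z ≠ 0 := by rintro rfl; simp at hz; linarith
    have hE : qPochInf q z ≠ 0 := qp_ne_zero' q hq0 hq1 _ (by rw [hz]; exact h2)
    have hst := qp_step q hq0 hq1 z
    rw [hst] at hE
    have e1 := left_ne_zero_of_mul hE
    have e2 := right_ne_zero_of_mul hE
    have e3 : qPochInf q (c / z) ≠ 0 := qp_ne_zero' q hq0 hq1 _ (by
        rw [norm_div, Complex.norm_real, Real.norm_eq_abs, abs_of_pos hc0, div_lt_one (by linarith)]
        linarith)
    simp only [hP, qpF]
    rw [hst]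
    field_simp
    ring
  have hC : (∮ z in C(0, r / q), P z) = -(1 / (a * q ^ (n + 1))) *
      ((∮ z in C(0, r), z ^ (n + 1) * qpF q c a z / z) -
      c * (∮ z in C(0, r), z ^ n * qpF q c a z / z)) := by
    have : r / q = q⁻¹ * r := by ring
    rw [this, qp_scale, ← circleIntegral.integral_const_mul, ← circleIntegral.integral_const_mul,
      ← circleIntegral.integral_sub (hcint (n + 1)), ← circleIntegral.integral_const_mul]
    · apply circleIntegral.integral_congr hr.le
      intro z hz
      simp at hz
      have hz0 : z ≠ 0 := by rintro rfl; simp at hz; linarith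
      have hE : qPochInf q z ≠ 0 := qp_ne_zero' q hq0 hq1 _ (by rw [hz]; exact h2)
      have e3 : qPochInf q (c / z) ≠ 0 := qp_ne_zero' q hq0 hq1 _ (by
        rw [norm_div, Complex.norm_real, Real.norm_eq_abs, abs_of_pos hc0, div_lt_one (by linarith)]
        linarith)
      have s1 := qp_step q hq0 hq1 (c / z)
      have s2 := qp_step q hq0 hq1 (a * q / z)
      have s3 := qp_step q hq0 hq1 (z / (a * q))
      have t3 : (q : ℂ) * (z / (a * q)) = z / a := by field_simp
      rw [t3] at s3
      rw [s1] at e3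
      have e4 := left_ne_zero_of_mul e3
      have e5 := right_ne_zero_of_mul e3
      simp only [hP, qpF, Complex.ofReal_inv]
      rw [show a * q / ((q : ℂ)⁻¹ * z) = q * (a * q / z) by field_simp,
        show (q : ℂ)⁻¹ * z / a = z / (a * q) by field_simp,
        show (q : ℂ) * ((q : ℂ)⁻¹ * z) = z by field_simp,
        show c / ((q : ℂ)⁻¹ * z) = q * (c / z) by field_simp, s1, s2, s3]
      have e6 : z - c ≠ 0 := by
        intro h
        apply e4
        field_simp
        simpa using h
      generalize qPochInf q (q * (a * q / z)) = X1 at *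
      generalize qPochInf q (q * (c / z)) = X2 at *
      generalize qPochInf q (z / a) = X3 at *
      generalize qPochInf q z = X4 at *
      rw [mul_pow, inv_pow, pow_succ]
      field_simp
      ring
    · have := (hcint n).const_smul (a := (c : ℂ))
      exact this
  rw [hC, hB] at hA
  have : (a * (q : ℂ) ^ (n + 1)) ≠ 0 := mul_ne_zero ha (pow_ne_zero _ hqC)
  field_simp at hA
  linear_combination -hA

theorem qp_limit (q c : ℝ) (a : ℂ) (hq0 : 0 < q) (hq1 : q < 1) (hc0 : 0 < c) (hc1 : c < 1)
    (r : ℝ) (h1 : c < r) (h2 : r < 1) :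
    Tendsto (fun n : ℕ => (∮ z in C(0, r), z ^ n * qpF q c a z / z) / (c : ℂ) ^ n) atTop
      (𝓝 (2 * Real.pi * Complex.I * (qPochInf q (a * q / c) * qPochInf q (c / a) /
        (qPochInf q c * qPochInf q q)))) := by
  have hr : 0 < r := hc0.trans h1
  have hcC : (c : ℂ) ≠ 0 := by exact_mod_cast hc0.ne'
  set g : ℂ → ℂ := fun z => qPochInf q (a * q / z) * qPochInf q (z / a) /
    (qPochInf q z * qPochInf q (q * (c / z))) with hg
  have hgc : g c = qPochInf q (a * q / c) * qPochInf q (c / a) /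
        (qPochInf q c * qPochInf q q) := by
    simp only [hg]
    rw [div_self hcC, mul_one]
  rw [← hgc]
  set D : Set ℂ := {z | q * c < ‖z‖ ∧ ‖z‖ < 1} with hD
  have hDo : IsOpen D := by
    have e1 : IsOpen {z : ℂ | q * c < ‖z‖} := isOpen_lt (by fun_prop) (by fun_prop)
    have e2 : IsOpen {z : ℂ | ‖z‖ < 1} := isOpen_lt (by fun_prop) (by fun_prop)
    exact e1.inter e2
  have hqc : q * c < c := by nlinarith
  have hqc0 : 0 < q * c := by positivity
  have hcD : (c : ℂ) ∈ D := by
    simp only [hD, Set.mem_ofPred_eq, Complex.norm_real, Real.norm_eq_abs, abs_of_pos hc0]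
    exact ⟨hqc, hc1⟩
  have hgd : DifferentiableOn ℂ g D := by
    rintro z ⟨hz1, hz2⟩
    apply DifferentiableAt.differentiableWithinAt
    have hz : z ≠ 0 := by rintro rfl; simp at hz1; linarith
    have hcz : ‖(q : ℂ) * (c / z)‖ < 1 := by
      rw [norm_mul, norm_div, Complex.norm_real, Real.norm_eq_abs, abs_of_pos hq0,
        Complex.norm_real, Real.norm_eq_abs, abs_of_pos hc0, ← mul_div_assoc,
        div_lt_one (by linarith)]
      exact hz1
    refine DifferentiableAt.div (DifferentiableAt.mul ?_ ?_) (DifferentiableAt.mul ?_ ?_) ?_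
    · exact qp_comp_diff q hq0 hq1 _ z (by fun_prop (disch := assumption))
    · exact qp_comp_diff q hq0 hq1 _ z (by fun_prop)
    · exact qp_differentiable q hq0 hq1 z
    · exact qp_comp_diff q hq0 hq1 _ z (by fun_prop (disch := assumption))
    · exact mul_ne_zero (qp_ne_zero' q hq0 hq1 _ hz2) (qp_ne_zero' q hq0 hq1 _ hcz)
  have hhd : DifferentiableOn ℂ (dslope g c) D :=
    (Complex.differentiableOn_dslope (hDo.mem_nhds hcD)).2 hgd
  have hhda : ∀ z : ℂ, q * c < ‖z‖ → ‖z‖ < 1 → DifferentiableAt ℂ (dslope g c) z :=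
    fun z hz1 hz2 => hhd.differentiableAt (hDo.mem_nhds ⟨hz1, hz2⟩)
  obtain ⟨s, hs1, hs2⟩ := exists_between hqc
  have hs0 : 0 < s := hqc0.trans hs1
  have key : ∀ n : ℕ, (∮ z in C(0, r), z ^ n * qpF q c a z / z) =
      2 * Real.pi * Complex.I * (c ^ n * g c) + ∮ z in C(0, s), z ^ n * dslope g c z := by
    intro n
    have hA : (∮ z in C(0, r), z ^ n * dslope g c z) = ∮ z in C(0, s), z ^ n * dslope g c z := by
      apply qp_annulus _ _ _ hs0 (by linarith)
      intro z hz1 hz2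
      have := hhda z (by linarith) (by linarith)
      fun_prop
    have hB : (∮ z in C(0, r), (z - c)⁻¹ • (z ^ n * g c)) =
        (2 * Real.pi * Complex.I : ℂ) • ((c : ℂ) ^ n * g c) := by
      apply DifferentiableOn.circleIntegral_sub_inv_smul (f := fun z : ℂ => z ^ n * g c)
      · fun_prop
      · simp [abs_of_pos hc0, h1]
    rw [smul_eq_mul] at hB
    rw [← hA, ← hB, ← circleIntegral.integral_add]
    · apply circleIntegral.integral_congr hr.le
      intro z hz
      simp at hz
      have hz0 : z ≠ 0 := by rintro rfl; simp at hz; linarith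
      have hzc : z ≠ c := by
        rintro rfl
        simp [abs_of_pos hc0] at hz
        linarith
      have hzc' := sub_ne_zero.2 hzc
      have hE : qPochInf q z ≠ 0 := qp_ne_zero' q hq0 hq1 _ (by rw [hz]; exact h2)
      have e3 : qPochInf q (c / z) ≠ 0 := qp_ne_zero' q hq0 hq1 _ (by
        rw [norm_div, Complex.norm_real, Real.norm_eq_abs, abs_of_pos hc0, div_lt_one (by linarith)]
        linarith)
      have s1 := qp_step q hq0 hq1 (c / z)
      have e5 := e3
      rw [s1] at e5
      have e6 := right_ne_zero_of_mul e5
      have hfg : qpF q c a z / z = g z / (z - c) := by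
        simp only [qpF, hg]
        rw [s1]
        have e7 : 1 - c / z = (z - c) / z := by field_simp
        rw [e7]
        field_simp
      have hsl : dslope g c z = (z - c)⁻¹ * (g z - g c) := by
        rw [dslope_of_ne _ hzc, slope_def_module, smul_eq_mul]
      simp only [mul_div_assoc, hfg, hsl, smul_eq_mul]
      field_simp
      ring
    · apply ContinuousOn.circleIntegrable hr.le
      intro z hz
      simp at hz
      have hzc : z - c ≠ 0 := by
        intro h
        rw [sub_eq_zero] at h
        rw [h] at hz
        simp [abs_of_pos hc0] at hz
        linarith
      apply ContinuousAt.continuousWithinAt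
      simp only [smul_eq_mul]
      fun_prop (disch := assumption)
    · apply ContinuousOn.circleIntegrable hr.le
      intro z hz
      simp at hz
      have := (hhda z (by linarith) (by linarith)).continuousAt
      apply ContinuousAt.continuousWithinAt
      fun_prop
  obtain ⟨M, hM⟩ : ∃ M, ∀ z ∈ sphere (0 : ℂ) s, ‖dslope g c z‖ ≤ M := by
    apply (isCompact_sphere (0 : ℂ) s).exists_bound_of_continuousOn
    intro z hz
    simp at hz
    exact (hhda z (by linarith) (by linarith)).continuousAt.continuousWithinAt
  have hbound : ∀ n : ℕ, ‖(∮ z in C(0, s), z ^ n * dslope g c z) / (c : ℂ) ^ n‖ ≤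
      (2 * Real.pi * s * M) * (s / c) ^ n := by
    intro n
    have := circleIntegral.norm_integral_le_of_norm_le_const (c := 0) (R := s)
      (f := fun z : ℂ => z ^ n * dslope g c z) (C := s ^ n * M) hs0.le (by
        intro z hz
        have h := hM z hz
        simp at hz
        rw [norm_mul, norm_pow, hz]
        gcongr)
    rw [norm_div, norm_pow, Complex.norm_real, Real.norm_eq_abs, abs_of_pos hc0, div_pow,
      div_le_iff₀ (by positivity)]
    calc _ ≤ _ := this
      _ = _ := by field_simp
  have hz : Tendsto (fun n : ℕ => (∮ z in C(0, s), z ^ n * dslope g c z) / (c : ℂ) ^ n) atTop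
      (𝓝 0) := by
    apply squeeze_zero_norm hbound
    have := tendsto_pow_atTop_nhds_zero_of_lt_one (r := s / c) (by positivity)
      (by rw [div_lt_one hc0]; exact hs2)
    simpa using this.const_mul (2 * Real.pi * s * M)
  have := hz.const_add (2 * Real.pi * Complex.I * g c)
  rw [add_zero] at this
  refine this.congr fun n => ?_
  rw [key]
  field_simp

theorem qp_laurent (q c : ℝ) (a : ℂ) (hq0 : 0 < q) (hq1 : q < 1) (hc0 : 0 < c) (hc1 : c < 1)
    (ha : a ≠ 0) (r : ℝ) (h1 : c < r) (h2 : r < 1)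
    (hn1 : ∀ m : ℕ, qPochInf q (a * q ^ (m + 1)) ≠ 0)
    (hn2 : ∀ m : ℕ, qPochInf q (a * q ^ (m + 1) / c) ≠ 0) (n : ℕ) :
    (∮ z in C(0, r), z ^ n * qpF q c a z / z) =
      2 * Real.pi * Complex.I * (qPochInf q (a * q / c) * qPochInf q (c / a) /
        (qPochInf q c * qPochInf q q)) * c ^ n * qPochInf q (a * q ^ (n + 1)) /
          qPochInf q (a * q ^ (n + 1) / c) := by
  have hcC : (c : ℂ) ≠ 0 := by exact_mod_cast hc0.ne'
  set K : ℕ → ℂ := fun n => ∮ z in C(0, r), z ^ n * qpF q c a z / z with hK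
  set T : ℕ → ℂ := fun n => K n / c ^ n * (qPochInf q (a * q ^ (n + 1) / c) /
    qPochInf q (a * q ^ (n + 1))) with hT
  have hstep : ∀ m, T (m + 1) = T m := by
    intro m
    have hrec := qp_rec q c a hq0 hq1 hc0 ha r h1 h2 m
    change K (m + 1) * _ = K m * _ at hrec
    have s1 := qp_step q hq0 hq1 (a * q ^ (m + 1))
    have s2 := qp_step q hq0 hq1 (a * q ^ (m + 1) / c)
    have e1 := hn1 m
    have e2 := hn1 (m + 1)
    rw [show (q : ℂ) * (a * q ^ (m + 1)) = a * q ^ (m + 1 + 1) by ring] at s1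
    rw [show (q : ℂ) * (a * q ^ (m + 1) / c) = a * q ^ (m + 1 + 1) / c by ring] at s2
    simp only [hT]
    have e3 : 1 - a * q ^ (m + 1) ≠ 0 := by
      rw [s1] at e1
      exact left_ne_zero_of_mul e1
    have hK1 : K (m + 1) = K m * (c - a * q ^ (m + 1)) / (1 - a * q ^ (m + 1)) := by
      rw [eq_div_iff e3]; exact hrec
    rw [s1, s2, hK1]
    generalize qPochInf q (a * q ^ (m + 1 + 1)) = X at *
    generalize qPochInf q (a * q ^ (m + 1 + 1) / c) = Y at *
    generalize a * (q : ℂ) ^ (m + 1) = Z at *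
    rw [pow_succ]
    field_simp
  have hconst : ∀ m, T m = T 0 := by
    intro m
    induction m with
    | zero => rfl
    | succ m ih => rw [hstep, ih]
  have hlim := qp_limit q c a hq0 hq1 hc0 hc1 r h1 h2
  have hpow : Tendsto (fun m : ℕ => (q : ℂ) ^ (m + 1)) atTop (𝓝 0) := by
    rw [tendsto_add_atTop_iff_nat (f := fun m : ℕ => (q : ℂ) ^ m) 1]
    apply tendsto_pow_atTop_nhds_zero_of_norm_lt_one
    simpa [abs_of_pos hq0] using hq1
  have hcont : Tendsto (qPochInf q) (𝓝 0) (𝓝 1) := by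
    have := ((qp_differentiable q hq0 hq1) 0).continuousAt.tendsto
    rwa [qp_zero] at this
  have l1 : Tendsto (fun m : ℕ => qPochInf q (a * q ^ (m + 1))) atTop (𝓝 1) :=
    hcont.comp (by simpa using hpow.const_mul a)
  have l2 : Tendsto (fun m : ℕ => qPochInf q (a * q ^ (m + 1) / c)) atTop (𝓝 1) :=
    hcont.comp (by simpa using (hpow.const_mul a).div_const (c : ℂ))
  have hl := hlim.mul (l2.div l1 one_ne_zero)
  rw [div_one, mul_one] at hl
  have hl2 : Tendsto T atTop (𝓝 (T n)) := by
    have : T = fun _ => T n := by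
      ext m
      rw [hconst m, hconst n]
    rw [this]
    exact tendsto_const_nhds
  have hfin := tendsto_nhds_unique hl2 hl
  rw [← hfin]
  change K n = _
  simp only [hT]
  have e1 := hn1 n
  have e2 := hn2 n
  generalize qPochInf q (a * q ^ (n + 1)) = X at *
  generalize qPochInf q (a * q ^ (n + 1) / c) = Y at *
  field_simp

theorem qpow_add' (q : ℝ) (x y : ℂ) : qpow q (x + y) = qpow q x * qpow q y := by
  simp only [qpow, add_mul, Complex.exp_add]

theorem qpow_ofReal' (q : ℝ) (hq0 : 0 < q) (x : ℝ) : qpow q (x : ℂ) = ((q ^ x : ℝ) : ℂ) := by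
  rw [qpow, Real.rpow_def_of_pos hq0]
  push_cast
  rw [mul_comm]

theorem qpow_nat' (q : ℝ) (hq0 : 0 < q) (m : ℕ) : qpow q (m : ℂ) = (q : ℂ) ^ m := by
  have := qpow_ofReal' q hq0 m
  rw [Real.rpow_natCast] at this
  push_cast at this
  exact this

theorem qpow_one' (q : ℝ) (hq0 : 0 < q) : qpow q 1 = q := by
  have := qpow_nat' q hq0 1
  simpa using this

theorem qpow_ne' (q : ℝ) (x : ℂ) : qpow q x ≠ 0 := Complex.exp_ne_zero _

/-- Evaluation of the basic contour integral as a ratio of q-Gamma functions. -/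
theorem stmt12 (q k : ℝ) (hq0 : 0 < q) (hq1 : q < 1) (hk0 : 0 < k) (hk1 : k < 1)
    (n : ℕ) (lam1 lam2 : ℂ) (hre : 0 < (lam2 - lam1).re + n)
    (hnd1 : ∀ m : ℕ, qpow q (lam2 - lam1 + 1 + m) ≠ 1)
    (hnd2 : ∀ m : ℕ, qpow q (lam2 - lam1 + k + m) ≠ 1)
    (hnd3 : ∀ m : ℕ, qpow q (lam1 - lam2 + 1 - k + m) ≠ 1)
    (R : ℝ) (hR1 : q ^ ((1 - k) / 2) < R) (hR2 : R < q ^ ((k - 1) / 2)) :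
    (1 / (2 * (Real.pi : ℂ) * Complex.I)) *
        (∮ y in C(0, R),
          y ^ n *
            (qTheta q (qpow q (lam2 - lam1 + (k + 1) / 2) / y) /
              qTheta q (qpow q ((1 + k) / 2) / y)) *
            (qPochInf q (qpow q ((1 + k) / 2) / y) /
              qPochInf q (qpow q ((1 - k) / 2) / y)) / y) =
      qpow q ((n * (1 - k) / 2 : ℝ)) *
        (qGamma q (1 - k) / (qGamma q (lam2 - lam1 + 1) * qGamma q (lam1 - lam2 + 1 - k))) *
        (qGamma q (lam2 - lam1 + k + n) / qGamma q (lam2 - lam1 + k)) *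
        (qGamma q (lam2 - lam1 + 1) / qGamma q (lam2 - lam1 + n + 1)) := by
  have hqC : (q : ℂ) ≠ 0 := by exact_mod_cast hq0.ne'
  set s : ℂ := lam2 - lam1 with hs
  set b : ℝ := q ^ ((1 - k) / 2) with hb
  have hb0 : 0 < b := Real.rpow_pos_of_pos hq0 _
  have hb1 : b < 1 := Real.rpow_lt_one hq0.le hq1 (by linarith)
  have hR0 : 0 < R := hb0.trans hR1
  have hbC : (b : ℂ) ≠ 0 := by exact_mod_cast hb0.ne'
  have hbinv : q ^ ((k - 1) / 2) = b⁻¹ := by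
    rw [hb, ← Real.rpow_neg hq0.le]; congr 1; ring
  have hbR : b * R < 1 := by
    rw [hbinv] at hR2
    calc b * R < b * b⁻¹ := by gcongr
      _ = 1 := mul_inv_cancel₀ hb0.ne'
  set c : ℝ := b ^ 2 with hc
  have hc0 : 0 < c := by positivity
  have hc1 : c < 1 := by nlinarith
  have hcR : c < b * R := by nlinarith
  have hcC : (c : ℂ) ≠ 0 := by exact_mod_cast hc0.ne'
  have hcb : (c : ℂ) = b * b := by rw [hc]; push_cast; ring
  set a : ℂ := qpow q s with ha
  have ha0 : a ≠ 0 := qpow_ne' _ _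
  have p1 : qpow q ((1 - k) / 2) = b := by
    rw [hb, ← qpow_ofReal' q hq0]; push_cast; rfl
  have p2 : qpow q ((1 + k) / 2) = q / b := by
    rw [eq_div_iff hbC, ← p1, ← qpow_add']
    rw [← qpow_one' q hq0]
    congr 1; ring
  have p3 : qpow q (s + (k + 1) / 2) = a * q / b := by
    rw [qpow_add', add_comm (k : ℂ) 1, p2, ha, mul_div_assoc]
  have p4 : qpow q (1 - k) = c := by
    rw [hcb, ← p1, ← qpow_add']; congr 1; ring
  have p5 : qpow q k = q / c := by
    rw [eq_div_iff hcC, ← p4, ← qpow_add', ← qpow_one' q hq0]; congr 1; ring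
  have p6 : ∀ m : ℕ, qpow q (s + 1 + m) = a * q ^ (m + 1) := by
    intro m
    rw [qpow_add', qpow_add', qpow_one' q hq0, qpow_nat' q hq0, pow_succ]; ring
  have p7 : ∀ m : ℕ, qpow q (s + k + m) = a * q ^ (m + 1) / c := by
    intro m
    rw [qpow_add', qpow_add', p5, qpow_nat' q hq0, pow_succ]; ring
  have p8 : qpow q (lam1 - lam2 + 1 - k) = c / a := by
    rw [eq_div_iff ha0, ← p4, ha, ← qpow_add', hs]; congr 1; ring
  have p9 : qpow q (s + n + 1) = a * q ^ (n + 1) := by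
    rw [← p6]; congr 1; ring
  have p10 : qpow q (s + 1) = a * q := by
    rw [qpow_add', qpow_one' q hq0]
  have p11 : qpow q (s + k) = a * q / c := by
    rw [qpow_add', p5]; ring
  have p12 : qpow q ((n * (1 - k) / 2 : ℝ)) = (b : ℂ) ^ n := by
    rw [qpow_ofReal' q hq0, hb, ← Complex.ofReal_pow, ← Real.rpow_natCast, ← Real.rpow_mul hq0.le]
    congr 2; ring
  have n1 : ∀ m : ℕ, qPochInf q (a * q ^ (m + 1)) ≠ 0 := by
    intro m
    apply qp_ne_zero q hq0 hq1
    intro i hi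
    apply hnd1 (m + i)
    rw [p6, ← hi]; ring
  have n2 : ∀ m : ℕ, qPochInf q (a * q ^ (m + 1) / c) ≠ 0 := by
    intro m
    apply qp_ne_zero q hq0 hq1
    intro i hi
    apply hnd2 (m + i)
    rw [p7, ← hi]; ring
  have n3 : qPochInf q (c / a) ≠ 0 := by
    apply qp_ne_zero q hq0 hq1
    intro i hi
    apply hnd3 i
    rw [qpow_add', p8, qpow_nat' q hq0, hi]
  have n4 : qPochInf q (q : ℂ) ≠ 0 := qp_ne_zero' q hq0 hq1 _ (by
    rw [Complex.norm_real, Real.norm_eq_abs, abs_of_pos hq0]; exact hq1)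
  have n5 : qPochInf q (c : ℂ) ≠ 0 := qp_ne_zero' q hq0 hq1 _ (by
    rw [Complex.norm_real, Real.norm_eq_abs, abs_of_pos hc0]; exact hc1)
  have n6 := n1 0
  have n7 := n2 0
  simp only [zero_add, pow_one] at n6 n7
  have hmain := qp_laurent q c a hq0 hq1 hc0 hc1 ha0 (b * R) hcR hbR n1 n2 n
  rw [qp_scale] at hmain
  have hcint : (∮ y in C(0, R),
          y ^ n *
            (qTheta q (qpow q (s + (k + 1) / 2) / y) /
              qTheta q (qpow q ((1 + k) / 2) / y)) *
            (qPochInf q (qpow q ((1 + k) / 2) / y) /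
              qPochInf q (qpow q ((1 - k) / 2) / y)) / y) =
      ((b : ℂ) ^ n)⁻¹ * (b * ∮ z in C(0, R), (b * z) ^ n * qpF q c a (b * z) / (b * z)) := by
    rw [← circleIntegral.integral_const_mul, ← circleIntegral.integral_const_mul]
    apply circleIntegral.integral_congr hR0.le
    intro y hy
    simp at hy
    have hy0 : y ≠ 0 := by rintro rfl; simp at hy; linarith
    simp only [p1, p2, p3, qTheta, qpF]
    have e1 : (q : ℂ) * (a * q / b / y)⁻¹ = b * y / a := by field_simp
    have e2 : (q : ℂ) * (q / b / y)⁻¹ = b * y := by field_simp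
    have e3 : a * q / (b * y) = a * q / b / y := by field_simp
    have e4 : (c : ℂ) / (b * y) = b / y := by rw [hcb]; field_simp
    rw [e1, e2, e3, e4]
    have m1 : qPochInf q (q / b / y) ≠ 0 := qp_ne_zero' q hq0 hq1 _ (by
      rw [norm_div, norm_div, Complex.norm_real, Complex.norm_real, Real.norm_eq_abs,
        Real.norm_eq_abs, abs_of_pos hq0, abs_of_pos hb0, hy, div_div, div_lt_one (by positivity)]
      have : q < c := by
        rw [hc, hb, ← Real.rpow_natCast, ← Real.rpow_mul hq0.le]
        calc q = q ^ (1 : ℝ) := (Real.rpow_one q).symm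
          _ < _ := Real.rpow_lt_rpow_of_exponent_gt hq0 hq1 (by push_cast; linarith)
      linarith)
    have m2 : qPochInf q (b * y) ≠ 0 := qp_ne_zero' q hq0 hq1 _ (by
      rw [norm_mul, Complex.norm_real, Real.norm_eq_abs, abs_of_pos hb0, hy]; exact hbR)
    have m3 : qPochInf q (b / y) ≠ 0 := qp_ne_zero' q hq0 hq1 _ (by
      rw [norm_div, Complex.norm_real, Real.norm_eq_abs, abs_of_pos hb0, hy, div_lt_one hR0]
      exact hR1)
    rw [mul_pow]
    generalize qPochInf q (q / b / y) = X1 at *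
    generalize qPochInf q (b * y) = X2 at *
    generalize qPochInf q (b / y) = X3 at *
    generalize qPochInf q (a * q / b / y) = X4 at *
    generalize qPochInf q (b * y / a) = X5 at *
    field_simp
  rw [hcint, hmain]
  simp only [qGamma]
  rw [p12, p4, p10, p8, p7, p11, p9]
  have n8 := n1 n
  have n9 := n2 n
  have hq1C : (1 - (q : ℂ)) ≠ 0 := by
    rw [sub_ne_zero]
    exact_mod_cast hq1.ne'
  have hcp : ∀ x y : ℂ, (1 - (q : ℂ)) ^ (x + y) = (1 - (q : ℂ)) ^ x * (1 - (q : ℂ)) ^ y :=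
    fun x y => Complex.cpow_add _ _ hq1C
  have hcne : ∀ x : ℂ, (1 - (q : ℂ)) ^ x ≠ 0 := fun x => by
    rw [Complex.cpow_ne_zero_iff]; exact Or.inl hq1C
  have c1 : (1 - (q : ℂ)) ^ (1 - (1 - (k : ℂ))) =
      (1 - (q : ℂ)) ^ (1 - (s + 1)) * (1 - (q : ℂ)) ^ (1 - (lam1 - lam2 + 1 - k)) := by
    rw [← hcp, hs]; congr 1; ring
  have c2 : (1 - (q : ℂ)) ^ (1 - (s + k)) =
      (1 - (q : ℂ)) ^ (1 - (s + k + n)) * (1 - (q : ℂ)) ^ (n : ℂ) := by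
    rw [← hcp]; congr 1; ring
  have c3 : (1 - (q : ℂ)) ^ (1 - (s + 1)) =
      (1 - (q : ℂ)) ^ (1 - (s + n + 1)) * (1 - (q : ℂ)) ^ (n : ℂ) := by
    rw [← hcp]; congr 1; ring
  rw [c1, c2, c3]
  have d1 := hcne (1 - (s + n + 1))
  have d2 := hcne n
  have d3 := hcne (1 - (s + k + n))
  have d4 := hcne (1 - (lam1 - lam2 + 1 - k))
  generalize (1 - (q : ℂ)) ^ (1 - (s + n + 1)) = Y1 at *
  generalize (1 - (q : ℂ)) ^ (n : ℂ) = Y2 at *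
  generalize (1 - (q : ℂ)) ^ (1 - (s + k + n)) = Y3 at *
  generalize (1 - (q : ℂ)) ^ (1 - (lam1 - lam2 + 1 - k)) = Y4 at *
  generalize qPochInf q (a * q ^ (n + 1)) = Z1 at *
  generalize qPochInf q (a * q ^ (n + 1) / c) = Z2 at *
  generalize qPochInf q (c / a) = Z3 at *
  generalize qPochInf q (q : ℂ) = Z4 at *
  generalize qPochInf q (c : ℂ) = Z5 at *
  generalize qPochInf q (a * q) = Z6 at *
  generalize qPochInf q (a * q / c) = Z7 at *
  rw [hcb, mul_pow]
  have hpi : (Real.pi : ℂ) ≠ 0 := by exact_mod_cast Real.pi_ne_zero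
  have hI := Complex.I_ne_zero
  field_simp
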